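/- Assume F has characteristic 2 and let 0 ≤ s' ≤ k. Let u ∈ F^{2^k} be arbitrary (a GM-PC node: all positions outside the leftmost length-2^{s'} parity node are information positions), let c be the associated codeword, and let c' ∈ F^{2^{s'}} be the codeword of the first 2^{s'} entries of u under G2^{⊗s'}, i.e., c'(j) = ∑_{m<2^{s'}} u(m)·G2^{⊗s'}(m,j). Then for every 0 ≤ j < 2^{s'}: ∑_{a=0}^{2^{k−s'}−1} g0inv^{(k−s')}(a)·c(2^{s'}·a + j) = c'(j). (Paper's Theorem 8.) -/

import Mathlib

open Finset

variable {F : Type*}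

/-- Kronecker power of a 2×2 matrix, defined by the binary-digit product formula:
the `(i,j)` entry of `kron M k` is `∏ t < k, M i_t j_t` where `i_t, j_t` are the
`t`-th binary digits of `i` and `j`. -/
noncomputable def kron [Field F] (M : Matrix (Fin 2) (Fin 2) F) (k : ℕ) :
    Matrix (Fin (2 ^ k)) (Fin (2 ^ k)) F :=
  fun i j => ∏ t ∈ Finset.range k,
    M (if (i : ℕ).testBit t then 1 else 0) (if (j : ℕ).testBit t then 1 else 0)

/-- The 2×2 non-binary polar kernel with rows (μ, 0) and (γ, δ). -/
noncomputable def G2 [Field F] (μ γ δ : F) : Matrix (Fin 2) (Fin 2) F := !![μ, 0; γ, δ]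

/-- `Gk μ γ δ k = G2^{⊗k}`, the k-fold Kronecker power of the kernel. -/
noncomputable def Gk [Field F] (μ γ δ : F) (k : ℕ) : Matrix (Fin (2 ^ k)) (Fin (2 ^ k)) F :=
  kron (G2 μ γ δ) k

/-- `g0inv μ γ δ k` : first column of the inverse of `G2^{⊗k}`. -/
noncomputable def g0inv [Field F] (μ γ δ : F) (k : ℕ) (j : Fin (2 ^ k)) : F :=
  (Gk μ γ δ k)⁻¹ j ⟨0, Nat.two_pow_pos k⟩

/-- `rk μ γ δ k` : last row of `G2^{⊗k}`. -/
noncomputable def rk [Field F] (μ γ δ : F) (k : ℕ) (j : Fin (2 ^ k)) : F :=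
  Gk μ γ δ k ⟨2 ^ k - 1, by have := Nat.two_pow_pos k; omega⟩ j

/-- codeword associated to an input vector `u`: `cᵀ = uᵀ · G2^{⊗k}`. -/
noncomputable def codeword [Field F] (μ γ δ : F) (k : ℕ) (u : Fin (2 ^ k) → F)
    (j : Fin (2 ^ k)) : F :=
  ∑ i, u i * Gk μ γ δ k i j

theorem index_lt {p q n a b : ℕ} (ha : a < q) (hb : b < p) (h : p * q = n) :
    p * a + b < n := by
  subst h
  have h1 : p * a + b < p * (a + 1) := by
    have hm : p * (a + 1) = p * a + p := by ring
    omega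
  have h2 : p * (a + 1) ≤ p * q := Nat.mul_le_mul le_rfl ha
  omega

theorem aux_testBit_high {s b m t : ℕ} (hm : m < 2 ^ s) :
    (2 ^ s * b + m).testBit (s + t) = b.testBit t := by
  rw [Nat.testBit_two_pow_mul_add _ hm]
  simp

theorem aux_testBit_low {s b m t : ℕ} (hm : m < 2 ^ s) (ht : t < s) :
    (2 ^ s * b + m).testBit t = m.testBit t := by
  rw [Nat.testBit_two_pow_mul_add _ hm]
  simp [ht]

theorem aux_split [Field F] (μ γ δ : F) (k s n : ℕ) (h : s + n = k)
    (b a : Fin (2 ^ n)) (m j : Fin (2 ^ s)) (x y : Fin (2 ^ k))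
    (hx : (x : ℕ) = 2 ^ s * b + m) (hy : (y : ℕ) = 2 ^ s * a + j) :
    Gk μ γ δ k x y = Gk μ γ δ s m j * Gk μ γ δ n b a := by
  subst h
  unfold Gk kron
  rw [Finset.prod_range_add, hx, hy]
  congr 1
  · refine Finset.prod_congr rfl fun t ht => ?_
    rw [aux_testBit_low m.isLt (Finset.mem_range.1 ht),
      aux_testBit_low j.isLt (Finset.mem_range.1 ht)]
  · refine Finset.prod_congr rfl fun t ht => ?_
    rw [aux_testBit_high m.isLt, aux_testBit_high j.isLt]

theorem aux_det [Field F] (μ γ δ : F) (hμ : μ ≠ 0) (hδ : δ ≠ 0) (k : ℕ) :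
    IsUnit (Gk μ γ δ k).det := by
  rw [Matrix.det_of_lowerTriangular, isUnit_iff_ne_zero, Finset.prod_ne_zero_iff]
  · intro i _
    unfold Gk kron
    rw [Finset.prod_ne_zero_iff]
    intro t _
    by_cases h : (i : ℕ).testBit t <;> simp [h, G2, hμ, hδ]
  · intro i j hij
    have hij : (i : ℕ) < j := by simpa using hij
    have : ∃ t, (j : ℕ).testBit t = true ∧ (i : ℕ).testBit t = false := by
      by_contra! hc
      have : (j : ℕ) &&& (i : ℕ) = j := by
        apply Nat.eq_of_testBit_eq
        intro t
        have := hc t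
        rw [Nat.testBit_and]
        cases h1 : (j : ℕ).testBit t <;> cases h2 : (i : ℕ).testBit t <;> simp_all
      have h2 := Nat.and_le_right (n := (j : ℕ)) (m := (i : ℕ))
      omega
    obtain ⟨t, h1, h2⟩ := this
    have ht : t < k := by
      by_contra! hc
      have := Nat.testBit_lt_two_pow (lt_of_lt_of_le j.isLt (Nat.pow_le_pow_right two_pos hc))
      simp_all
    unfold Gk kron
    refine Finset.prod_eq_zero (Finset.mem_range.2 ht) ?_
    simp [h1, h2, G2]

theorem aux_inv [Field F] (μ γ δ : F) (hμ : μ ≠ 0) (hδ : δ ≠ 0) (n : ℕ) (b : Fin (2 ^ n)) :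
    ∑ a, g0inv μ γ δ n a * Gk μ γ δ n b a = if b = ⟨0, Nat.two_pow_pos n⟩ then 1 else 0 := by
  have h := Matrix.mul_nonsing_inv _ (aux_det μ γ δ hμ hδ n)
  have h := congrFun (congrFun h b) ⟨0, Nat.two_pow_pos n⟩
  rw [Matrix.mul_apply, Matrix.one_apply] at h
  rw [← h]
  exact Finset.sum_congr rfl fun a _ => mul_comm _ _

/-- Paper's Theorem 8 (GM-PC node): in characteristic 2, for arbitrary `u`,
`∑_a g0inv^{(k−s')}(a)·c(2^{s'}·a + j) = c'(j)`, where `c'` is the codeword of the first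
`2^{s'}` inputs under `G2^{⊗s'}` (the parity node). -/
theorem stmt12 [Field F] [CharP F 2] (μ γ δ : F) (hμ : μ ≠ 0) (hγ : γ ≠ 0) (hδ : δ ≠ 0)
    (k s' : ℕ) (hs : s' ≤ k)
    (u : Fin (2 ^ k) → F)
    (c' : Fin (2 ^ s') → F)
    (hc' : ∀ j : Fin (2 ^ s'), c' j = ∑ mm : Fin (2 ^ s'),
      u ⟨(mm : ℕ), by
          have h1 : (2 : ℕ) ^ s' ≤ 2 ^ k := Nat.pow_le_pow_right (by norm_num) hs
          have := mm.isLt; omega⟩ * Gk μ γ δ s' mm j)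
    (j : Fin (2 ^ s')) :
    (∑ a : Fin (2 ^ (k - s')), g0inv μ γ δ (k - s') a *
        codeword μ γ δ k u
          ⟨2 ^ s' * (a : ℕ) + (j : ℕ),
            index_lt a.isLt j.isLt (by rw [← pow_add]; congr 1; omega)⟩) = c' j := by
  have hk : s' + (k - s') = k := by omega
  have hp : 2 ^ (k - s') * 2 ^ s' = 2 ^ k := by rw [← pow_add]; congr 1; omega
  let e : Fin (2 ^ (k - s')) × Fin (2 ^ s') ≃ Fin (2 ^ k) :=
    finProdFinEquiv.trans (finCongr hp)
  have he : ∀ b m, ((e (b, m) : Fin (2 ^ k)) : ℕ) = 2 ^ s' * b + m := by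
    intro b m
    simp [e, finProdFinEquiv, add_comm]
  have hcw : ∀ a : Fin (2 ^ (k - s')), codeword μ γ δ k u
          ⟨2 ^ s' * (a : ℕ) + (j : ℕ),
            index_lt a.isLt j.isLt (by rw [← pow_add]; rw [hk])⟩ =
      ∑ b, ∑ m, u (e (b, m)) * (Gk μ γ δ s' m j * Gk μ γ δ (k - s') b a) := by
    intro a
    unfold codeword
    rw [← e.sum_comp, Fintype.sum_prod_type]
    refine Finset.sum_congr rfl fun b _ => Finset.sum_congr rfl fun m _ => ?_
    rw [aux_split μ γ δ k s' (k - s') hk b a m j (e (b, m)) _ (he b m) rfl]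
  simp_rw [hcw, Finset.mul_sum]
  rw [Finset.sum_comm]
  have h2 : ∀ b : Fin (2 ^ (k - s')), (∑ a, ∑ m, g0inv μ γ δ (k - s') a *
      (u (e (b, m)) * (Gk μ γ δ s' m j * Gk μ γ δ (k - s') b a))) =
      (if b = ⟨0, Nat.two_pow_pos _⟩ then 1 else 0) * ∑ m, u (e (b, m)) * Gk μ γ δ s' m j := by
    intro b
    rw [← aux_inv μ γ δ hμ hδ, Finset.sum_mul_sum]
    refine Finset.sum_congr rfl fun a _ => Finset.sum_congr rfl fun m _ => ?_
    ring
  simp_rw [h2, ite_mul, one_mul, zero_mul]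
  rw [Finset.sum_ite_eq' Finset.univ, if_pos (Finset.mem_univ _), hc']
  refine Finset.sum_congr rfl fun m _ => ?_
  congr 2
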